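/- Let D = D(Γ, (g_i), (χ_i), (a_{ij})) be a generic datum of finite Cartan type (no q_{ii} is a root of unity) and λ a family of linking parameters for D with λ ≠ 0, i.e. λ_{ij} ≠ 0 for some i ≁ j. Then there exist disjoint nonempty sets X⁻ and X⁺ of connected components of the Dynkin graph of D whose union is the set of all connected components, an integer n ≥ 1, and an injective map t : {1,…,2n} → {1,…,θ} such that for all 1 ≤ i ≤ n the vertex t(i) lies in a component belonging to X⁻ and t(n+i) lies in a component belonging to X⁺, and such that the pairs (t(i), t(n+i)) and (t(n+i), t(i)) for 1 ≤ i ≤ n are exactly the ordered pairs (i,j) of linked vertices of (D, λ). -/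

import Mathlib

open scoped BigOperators

/-- `a` is a Cartan matrix of finite type: diagonal entries `2`, off-diagonal entries `≤ 0`,
`a i j = 0 ↔ a j i = 0`, and there are positive integers `d i` symmetrizing `a` such that the
symmetrized matrix is positive definite. -/
def IsFiniteCartanMatrix {θ : ℕ} (a : Fin θ → Fin θ → ℤ) : Prop :=
  (∀ i, a i i = 2) ∧
  (∀ i j, i ≠ j → a i j ≤ 0) ∧
  (∀ i j, (a i j = 0 ↔ a j i = 0)) ∧
  ∃ d : Fin θ → ℤ, (∀ i, 0 < d i) ∧ (∀ i j, d i * a i j = d j * a j i) ∧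
    (Matrix.of fun i j => ((d i * a i j : ℤ) : ℝ)).PosDef

/-- The Dynkin graph of the Cartan matrix `a`: an edge between `i ≠ j` iff `a i j ≠ 0`. -/
def dynkinGraph {θ : ℕ} (a : Fin θ → Fin θ → ℤ) : SimpleGraph (Fin θ) :=
  SimpleGraph.fromRel fun i j => a i j ≠ 0

/-- `D(Γ, (g i), (χ i), (a i j))` is a datum of finite Cartan type: with `q i j = χ j (g i)`,
one has `q i j * q j i = (q i i) ^ (a i j)` and `q i i ≠ 1`. -/
def IsCartanDatum {k : Type*} [Field k] {Γ : Type*} [CommGroup Γ] {θ : ℕ}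
    (g : Fin θ → Γ) (χ : Fin θ → Γ →* kˣ) (a : Fin θ → Fin θ → ℤ) : Prop :=
  IsFiniteCartanMatrix a ∧
  (∀ i j, χ j (g i) * χ i (g j) = χ i (g i) ^ (a i j)) ∧
  (∀ i, χ i (g i) ≠ 1)

/-- Vertices `i, j` are linkable: `i ≁ j` (they lie in different connected components of the
Dynkin graph), `g i * g j ≠ 1`, and `χ i * χ j = ε`. -/
def Linkable {k : Type*} [Field k] {Γ : Type*} [CommGroup Γ] {θ : ℕ}
    (g : Fin θ → Γ) (χ : Fin θ → Γ →* kˣ) (a : Fin θ → Fin θ → ℤ) (i j : Fin θ) : Prop :=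
  ¬ (dynkinGraph a).Reachable i j ∧ g i * g j ≠ 1 ∧ χ i * χ j = 1

/-- `lam` is a family of linking parameters for the datum: for `i ≁ j` one has
`lam j i = -q j i * lam i j`, and `lam i j = 0` whenever `g i * g j = 1` or `χ i * χ j ≠ ε`. -/
def IsLinkingFamily {k : Type*} [Field k] {Γ : Type*} [CommGroup Γ] {θ : ℕ}
    (g : Fin θ → Γ) (χ : Fin θ → Γ →* kˣ) (a : Fin θ → Fin θ → ℤ)
    (lam : Fin θ → Fin θ → k) : Prop :=
  (∀ i j, ¬ (dynkinGraph a).Reachable i j → lam j i = -(χ i (g j) : k) * lam i j) ∧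
  (∀ i j, ¬ (dynkinGraph a).Reachable i j → (g i * g j = 1 ∨ χ i * χ j ≠ 1) → lam i j = 0)

/-- Vertices `i, j` are linked: they are linkable and `lam i j ≠ 0`. -/
def Linked {k : Type*} [Field k] {Γ : Type*} [CommGroup Γ] {θ : ℕ}
    (g : Fin θ → Γ) (χ : Fin θ → Γ →* kˣ) (a : Fin θ → Fin θ → ℤ)
    (lam : Fin θ → Fin θ → k) (i j : Fin θ) : Prop :=
  Linkable g χ a i j ∧ lam i j ≠ 0

/-- The linking graph of `(D, lam)` (whose vertices are the connected components of the Dynkin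
graph, with an edge between two components iff they contain linked vertices) is bipartite,
i.e. the components can be `2`-colored so that no two linked vertices lie in equally colored
components. -/
def LinkingGraphBipartite {k : Type*} [Field k] {Γ : Type*} [CommGroup Γ] {θ : ℕ}
    (g : Fin θ → Γ) (χ : Fin θ → Γ →* kˣ) (a : Fin θ → Fin θ → ℤ)
    (lam : Fin θ → Fin θ → k) : Prop :=
  ∃ C : (dynkinGraph a).ConnectedComponent → Bool,
    ∀ i j, Linked g χ a lam i j →
      C ((dynkinGraph a).connectedComponentMk i) ≠ C ((dynkinGraph a).connectedComponentMk j)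

/-- The inclusion `{1,…,n} ↪ {1,…,2n}`. -/
def finL {n : ℕ} (r : Fin n) : Fin (2 * n) := ⟨r.1, by have := r.2; omega⟩

/-- The inclusion `{1,…,n} ↪ {1,…,2n}` sending `i` to `n + i`. -/
def finR {n : ℕ} (r : Fin n) : Fin (2 * n) := ⟨n + r.1, by have := r.2; omega⟩

/-!
Write `q i j = χ j (g i)`. Since no `q i i` is a root of unity and there are finitely many of them,
some homomorphism `φ : kˣ → ℚ` vanishes at none of them. On an edge of the Dynkin graph,
`q i i ^ a i j = q j j ^ a j i` with both exponents negative, so the sign of `φ (q i i)` is constant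
on connected components. Linkable vertices satisfy `q i i * q j j = 1`, so they carry opposite
signs: the sign is a `2`-colouring of the linking graph. Finally, if `i` were linkable to `j ≠ l`,
then `χ j = χ l` and `q j j = q l l`, whence `q j j ^ a j l = q j j ^ 2`, which contradicts
`a j l ≤ 0`; hence the linked pairs form a matching between the two colours.
-/

theorem exists_addMonoidHom_rat_forall_ne_zero {A : Type*} [AddCommGroup A] {ι : Type*} [Finite ι]
    (x : ι → A) (hx : ∀ i, ¬ IsOfFinAddOrder (x i)) : ∃ φ : A →+ ℚ, ∀ i, φ (x i) ≠ 0 := by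
  let toRat : A →ₗ[ℤ] TensorProduct ℤ ℚ A := TensorProduct.mk ℤ ℚ A 1
  have : IsLocalizedModule (nonZeroDivisors ℤ) toRat :=
    (isLocalizedModule_iff_isBaseChange _ ℚ toRat).2 (TensorProduct.isBaseChange ℤ A ℚ)
  have toRat_ne_zero : ∀ i, toRat (x i) ≠ 0 := fun i h => by
    obtain ⟨n, hn⟩ := (IsLocalizedModule.eq_zero_iff (nonZeroDivisors ℤ) toRat).1 h
    exact hx i (isOfFinAddOrder_iff_zsmul_eq_zero.2 ⟨n, nonZeroDivisors.coe_ne_zero n, hn⟩)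
  obtain ⟨f, hf⟩ := Module.exists_dual_forall_apply_ne_zero (K := ℚ) _ toRat_ne_zero
  exact ⟨f.toAddMonoidHom.comp toRat.toAddMonoidHom, hf⟩

theorem exists_enumeration_of_matching {α : Type*} [Finite α] {L : α → α → Prop} {c : α → Bool}
    (symm : ∀ i j, L i j → L j i) (rightUnique : ∀ i j l, L i j → L i l → j = l)
    (hc : ∀ i j, L i j → c i ≠ c j) :
    ∃ (n : ℕ) (u v : Fin n → α), Function.Injective u ∧ Function.Injective v ∧
      (∀ r, c (u r) = false ∧ c (v r) = true) ∧
      ∀ i j, L i j ↔ ∃ r, (i = u r ∧ j = v r) ∨ (i = v r ∧ j = u r) := by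
  obtain ⟨n, ⟨e⟩⟩ := Finite.exists_equiv_fin {p : α × α // L p.1 p.2 ∧ c p.1 = false}
  let u : Fin n → α := fun r => (e.symm r).1.1
  let v : Fin n → α := fun r => (e.symm r).1.2
  have hL : ∀ r, L (u r) (v r) := fun r => (e.symm r).2.1
  have hu : ∀ r, c (u r) = false := fun r => (e.symm r).2.2
  have hv : ∀ r, c (v r) = true := fun r =>
    Bool.eq_true_of_not_eq_false fun h => hc _ _ (hL r) ((hu r).trans h.symm)
  have uv_injective : ∀ r s, u r = u s → v r = v s → r = s := fun r s h h' =>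
    e.symm.injective (Subtype.ext (Prod.ext h h'))
  have exists_eq : ∀ i j, L i j → c i = false → ∃ r, i = u r ∧ j = v r := fun i j h hi =>
    ⟨e ⟨(i, j), h, hi⟩, by simp [u], by simp [v]⟩
  refine ⟨n, u, v, fun r s h => ?_, fun r s h => ?_, fun r => ⟨hu r, hv r⟩, fun i j => ⟨?_, ?_⟩⟩
  · exact uv_injective r s h (rightUnique _ _ _ (hL r) (h ▸ hL s))
  · exact uv_injective r s (rightUnique _ _ _ (symm _ _ (hL r)) (h ▸ symm _ _ (hL s))) h
  · intro h
    cases hi : c i with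
    | false => exact (exists_eq i j h hi).imp fun r => Or.inl
    | true =>
      have hj : c j = false := Bool.eq_false_of_not_eq_true fun hj => hc _ _ h (hi.trans hj.symm)
      exact (exists_eq j i (symm _ _ h) hj).imp fun r hr => Or.inr hr.symm
  · rintro ⟨r, ⟨rfl, rfl⟩ | ⟨rfl, rfl⟩⟩
    exacts [hL r, symm _ _ (hL r)]

theorem exists_injective_finL_finR {α : Type*} {n : ℕ} {u v : Fin n → α}
    (hu : Function.Injective u) (hv : Function.Injective v) (huv : ∀ r s, u r ≠ v s) :
    ∃ t : Fin (2 * n) → α, Function.Injective t ∧ (∀ r, t (finL r) = u r) ∧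
      ∀ r, t (finR r) = v r := by
  let e : Fin n ⊕ Fin n ≃ Fin (2 * n) := finSumFinEquiv.trans (finCongr (two_mul n).symm)
  have he_inl : ∀ r, finL r = e (Sum.inl r) := fun r => rfl
  have he_inr : ∀ r, finR r = e (Sum.inr r) := fun r => rfl
  refine ⟨Sum.elim u v ∘ e.symm, (hu.sumElim hv huv).comp e.symm.injective,
    fun r => ?_, fun r => ?_⟩
  · simp only [he_inl, Function.comp_apply, e.symm_apply_apply, Sum.elim_inl]
  · simp only [he_inr, Function.comp_apply, e.symm_apply_apply, Sum.elim_inr]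

/-- Generalized Cartan matrices in the sense of Kac: the conditions on a Cartan matrix of finite
type, without symmetrizability and positive definiteness. -/
structure IsGeneralizedCartanMatrix {ι : Type*} (a : ι → ι → ℤ) : Prop where
  diag : ∀ i, a i i = 2
  nonpos : ∀ i j, i ≠ j → a i j ≤ 0
  eq_zero_symm : ∀ i j, a i j = 0 → a j i = 0

theorem IsFiniteCartanMatrix.isGeneralizedCartanMatrix {θ : ℕ} {a : Fin θ → Fin θ → ℤ}
    (ha : IsFiniteCartanMatrix a) : IsGeneralizedCartanMatrix a :=
  ⟨ha.1, ha.2.1, fun i j => (ha.2.2.1 i j).1⟩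

theorem eq_zero_of_not_reachable {θ : ℕ} {a : Fin θ → Fin θ → ℤ} {i j : Fin θ}
    (h : ¬ (dynkinGraph a).Reachable i j) : a i j = 0 := by
  by_contra ha
  have hne : i ≠ j := fun e => h (e ▸ SimpleGraph.Reachable.rfl)
  exact h (SimpleGraph.Adj.reachable ((SimpleGraph.fromRel_adj _ _ _).2 ⟨hne, Or.inl ha⟩))

theorem IsGeneralizedCartanMatrix.neg_of_adj {θ : ℕ} {a : Fin θ → Fin θ → ℤ}
    (ha : IsGeneralizedCartanMatrix a) {i j : Fin θ} (h : (dynkinGraph a).Adj i j) : a i j < 0 := by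
  obtain ⟨hne, h⟩ := (SimpleGraph.fromRel_adj _ _ _).1 h
  exact lt_of_le_of_ne (ha.nonpos i j hne) (h.elim id (mt (ha.eq_zero_symm i j)))

/-- Data of Cartan type: the braiding matrix `q i j = χ j (g i)` satisfies
`q i j * q j i = q i i ^ a i j` for a generalized Cartan matrix `a`, not necessarily of finite
type. -/
structure IsGeneralizedCartanDatum {k : Type*} [Field k] {Γ : Type*} [CommGroup Γ] {θ : ℕ}
    (g : Fin θ → Γ) (χ : Fin θ → Γ →* kˣ) (a : Fin θ → Fin θ → ℤ) : Prop
    extends IsGeneralizedCartanMatrix a where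
  mul_swap : ∀ i j, χ j (g i) * χ i (g j) = χ i (g i) ^ a i j

section CartanDatum

variable {k : Type*} [Field k] {Γ : Type*} [CommGroup Γ] {θ : ℕ}
  {g : Fin θ → Γ} {χ : Fin θ → Γ →* kˣ} {a : Fin θ → Fin θ → ℤ} {lam : Fin θ → Fin θ → k}

theorem IsCartanDatum.isGeneralizedCartanDatum (hD : IsCartanDatum g χ a) :
    IsGeneralizedCartanDatum g χ a :=
  ⟨hD.1.isGeneralizedCartanMatrix, hD.2.1⟩

theorem IsGeneralizedCartanDatum.zpow_diag_eq (hD : IsGeneralizedCartanDatum g χ a) (i j : Fin θ) :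
    χ i (g i) ^ a i j = χ j (g j) ^ a j i := by
  rw [← hD.mul_swap i j, ← hD.mul_swap j i, mul_comm]

theorem IsGeneralizedCartanDatum.pos_iff_of_adj (hD : IsGeneralizedCartanDatum g χ a)
    (φ : Additive kˣ →+ ℚ) {i j : Fin θ} (h : (dynkinGraph a).Adj i j) :
    0 < φ (.ofMul (χ i (g i))) ↔ 0 < φ (.ofMul (χ j (g j))) := by
  have hφ : a i j • φ (.ofMul (χ i (g i))) = a j i • φ (.ofMul (χ j (g j))) := by
    simp only [← map_zsmul, ← ofMul_zpow, hD.zpow_diag_eq i j]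
  rw [← smul_neg_iff_of_neg_left (hD.neg_of_adj h), hφ,
    smul_neg_iff_of_neg_left (hD.neg_of_adj h.symm)]

theorem IsGeneralizedCartanDatum.pos_iff_of_walk (hD : IsGeneralizedCartanDatum g χ a)
    (φ : Additive kˣ →+ ℚ) {i j : Fin θ} (w : (dynkinGraph a).Walk i j) :
    0 < φ (.ofMul (χ i (g i))) ↔ 0 < φ (.ofMul (χ j (g j))) := by
  induction w with
  | nil => rfl
  | cons h _ ih => exact (hD.pos_iff_of_adj φ h).trans ih

theorem Linkable.symm {i j : Fin θ} (h : Linkable g χ a i j) : Linkable g χ a j i :=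
  ⟨fun h' => h.1 h'.symm, mul_comm (g i) (g j) ▸ h.2.1, mul_comm (χ i) (χ j) ▸ h.2.2⟩

theorem Linkable.diag_mul_diag (hD : IsGeneralizedCartanDatum g χ a) {i j : Fin θ}
    (h : Linkable g χ a i j) : χ i (g i) * χ j (g j) = 1 := by
  have hχ : ∀ x, χ i x * χ j x = 1 := DFunLike.congr_fun h.2.2
  have hq : χ j (g i) * χ i (g j) = 1 := by
    rw [hD.mul_swap, eq_zero_of_not_reachable h.1, zpow_zero]
  calc χ i (g i) * χ j (g j)
      = χ i (g i) * χ j (g j) * (χ j (g i) * χ i (g j)) := by rw [hq, mul_one]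
    _ = (χ i (g i) * χ j (g i)) * (χ i (g j) * χ j (g j)) := by ac_rfl
    _ = 1 := by rw [hχ, hχ, mul_one]

theorem Linkable.right_unique (hD : IsGeneralizedCartanDatum g χ a)
    (hgen : ∀ i, ¬ IsOfFinOrder (χ i (g i))) {i j l : Fin θ}
    (hj : Linkable g χ a i j) (hl : Linkable g χ a i l) : j = l := by
  by_contra hne
  have hχ : χ j = χ l := mul_left_cancel (hj.2.2.trans hl.2.2.symm)
  have hdiag : χ j (g j) = χ l (g l) :=
    mul_left_cancel ((hj.diag_mul_diag hD).trans (hl.diag_mul_diag hD).symm)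
  have hpow : χ j (g j) ^ a j l = χ j (g j) ^ a j j :=
    calc χ j (g j) ^ a j l
        = χ l (g j) * χ j (g l) := (hD.mul_swap j l).symm
      _ = χ j (g j) * χ l (g l) := by rw [hχ]
      _ = χ j (g j) * χ j (g j) := by rw [hdiag]
      _ = χ j (g j) ^ a j j := hD.mul_swap j j
  have ha : a j l = 2 :=
    (injective_zpow_iff_not_isOfFinOrder.2 (hgen j) hpow).trans (hD.diag j)
  have := hD.nonpos j l hne
  omega

theorem Linkable.pos_iff_not_pos (hD : IsGeneralizedCartanDatum g χ a) {φ : Additive kˣ →+ ℚ}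
    {i j : Fin θ} (hφ : φ (.ofMul (χ i (g i))) ≠ 0) (h : Linkable g χ a i j) :
    0 < φ (.ofMul (χ i (g i))) ↔ ¬ 0 < φ (.ofMul (χ j (g j))) := by
  have hadd : φ (.ofMul (χ i (g i))) + φ (.ofMul (χ j (g j))) = 0 := by
    rw [← map_add, ← ofMul_mul, h.diag_mul_diag hD, ofMul_one, map_zero]
  rw [← neg_eq_of_add_eq_zero_right hadd, neg_pos, not_lt, hφ.symm.le_iff_lt]

theorem IsGeneralizedCartanDatum.linkingGraphBipartite (hD : IsGeneralizedCartanDatum g χ a)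
    (hgen : ∀ i, ¬ IsOfFinOrder (χ i (g i))) (lam : Fin θ → Fin θ → k) :
    LinkingGraphBipartite g χ a lam := by
  obtain ⟨φ, hφ⟩ := exists_addMonoidHom_rat_forall_ne_zero
    (fun i => Additive.ofMul (χ i (g i))) fun i => isOfFinAddOrder_ofMul_iff.not.2 (hgen i)
  refine ⟨SimpleGraph.ConnectedComponent.lift (fun i => decide (0 < φ (.ofMul (χ i (g i)))))
    fun i j w _ => decide_eq_decide.2 (hD.pos_iff_of_walk φ w), fun i j h => ?_⟩
  rw [SimpleGraph.ConnectedComponent.lift_mk, SimpleGraph.ConnectedComponent.lift_mk, ne_eq,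
    decide_eq_decide, h.1.pos_iff_not_pos hD (hφ i)]
  exact not_iff_self

theorem Linked.symm (hlam : IsLinkingFamily g χ a lam) {i j : Fin θ}
    (h : Linked g χ a lam i j) : Linked g χ a lam j i := by
  refine ⟨h.1.symm, ?_⟩
  rw [hlam.1 i j h.1.1]
  exact mul_ne_zero (neg_ne_zero.2 (Units.ne_zero _)) h.2

theorem IsLinkingFamily.linked (hlam : IsLinkingFamily g χ a lam) {i j : Fin θ}
    (h : ¬ (dynkinGraph a).Reachable i j) (h0 : lam i j ≠ 0) : Linked g χ a lam i j :=
  ⟨⟨h, fun hg => h0 (hlam.2 i j h (Or.inl hg)),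
    by_contra fun hχ => h0 (hlam.2 i j h (Or.inr hχ))⟩, h0⟩

end CartanDatum

theorem statement6_general {k : Type*} [Field k] {Γ : Type*} [CommGroup Γ] {θ : ℕ}
    {g : Fin θ → Γ} {χ : Fin θ → Γ →* kˣ} {a : Fin θ → Fin θ → ℤ} {lam : Fin θ → Fin θ → k}
    (hD : IsGeneralizedCartanDatum g χ a) (hlam : IsLinkingFamily g χ a lam)
    (hgen : ∀ i, ¬ IsOfFinOrder (χ i (g i)))
    (hlam0 : ∃ i j, ¬ (dynkinGraph a).Reachable i j ∧ lam i j ≠ 0) :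
    ∃ (Xm Xp : Set ((dynkinGraph a).ConnectedComponent)),
      Xm.Nonempty ∧ Xp.Nonempty ∧ Disjoint Xm Xp ∧ Xm ∪ Xp = Set.univ ∧
      ∃ (n : ℕ) (_ : 1 ≤ n) (t : Fin (2 * n) → Fin θ), Function.Injective t ∧
        (∀ r : Fin n, (dynkinGraph a).connectedComponentMk (t (finL r)) ∈ Xm ∧
          (dynkinGraph a).connectedComponentMk (t (finR r)) ∈ Xp) ∧
        (∀ i j, Linked g χ a lam i j ↔
          ∃ r : Fin n, (i = t (finL r) ∧ j = t (finR r)) ∨ (i = t (finR r) ∧ j = t (finL r))) := by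
  obtain ⟨C, hC⟩ := hD.linkingGraphBipartite hgen lam
  obtain ⟨n, u, v, hu, hv, huv, hlinked⟩ := exists_enumeration_of_matching
    (fun i j => Linked.symm hlam) (fun i j l h h' => h.1.right_unique hD hgen h'.1) hC
  obtain ⟨t, ht, htL, htR⟩ := exists_injective_finL_finR hu hv fun r s h =>
    Bool.false_ne_true <| by rw [← (huv r).1, h, (huv s).2]
  simp only [← htL, ← htR] at huv hlinked
  obtain ⟨i, j, hij, h0⟩ := hlam0
  obtain ⟨r, -⟩ := (hlinked i j).1 (hlam.linked hij h0)
  refine ⟨C ⁻¹' {false}, C ⁻¹' {true}, ⟨_, (huv r).1⟩, ⟨_, (huv r).2⟩, ?_, ?_,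
    n, r.pos, t, ht, huv, hlinked⟩
  · exact Disjoint.preimage C (Set.disjoint_singleton.2 Bool.false_ne_true)
  · rw [← Set.preimage_union, ← Set.insert_eq, ← Bool.univ_eq, Set.preimage_univ]

theorem statement6 {k : Type*} [Field k] [IsAlgClosed k] [CharZero k]
    {Γ : Type*} [CommGroup Γ] {θ : ℕ}
    (g : Fin θ → Γ) (χ : Fin θ → Γ →* kˣ) (a : Fin θ → Fin θ → ℤ)
    (lam : Fin θ → Fin θ → k)
    (hD : IsCartanDatum g χ a) (hlam : IsLinkingFamily g χ a lam)
    (hgen : ∀ i, ¬ IsOfFinOrder (χ i (g i)))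
    (hlam0 : ∃ i j, ¬ (dynkinGraph a).Reachable i j ∧ lam i j ≠ 0) :
    ∃ (Xm Xp : Set ((dynkinGraph a).ConnectedComponent)),
      Xm.Nonempty ∧ Xp.Nonempty ∧ Disjoint Xm Xp ∧ Xm ∪ Xp = Set.univ ∧
      ∃ (n : ℕ) (_ : 1 ≤ n) (t : Fin (2 * n) → Fin θ), Function.Injective t ∧
        (∀ r : Fin n, (dynkinGraph a).connectedComponentMk (t (finL r)) ∈ Xm ∧
          (dynkinGraph a).connectedComponentMk (t (finR r)) ∈ Xp) ∧
        (∀ i j, Linked g χ a lam i j ↔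
          ∃ r : Fin n, (i = t (finL r) ∧ j = t (finR r)) ∨ (i = t (finR r) ∧ j = t (finL r))) := by
  exact statement6_general hD.isGeneralizedCartanDatum hlam hgen hlam0
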